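/- arXiv:0907.4894 — 2 statements merged into one kernel-verified Lean document; each statement's English description precedes it below -/
import Mathlib

section
/- For every complex number s with Re(s) > 1, ∑_{n=1}^∞ b₂(n)/n^s = (1 + 2^{-2s} + 2·2^{-3s}) (1 - 2^{-s}) ζ(s) (1 - 2^{-2s})^{-1} ζ(2s)^{-1}, where ζ is the Riemann zeta function. -/
/-- `b₂ n` is the number of primitive Dirichlet characters `χ` modulo `n` with values in `ℂ`
satisfying `χ ^ 2 = 1`. -/
noncomputable def b₂ (n : ℕ) : ℕ :=
  Nat.card {χ : DirichletCharacter ℂ n // χ.IsPrimitive ∧ χ ^ 2 = 1}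

/-!
Every character `χ` modulo `n` is induced by a unique primitive one, whose modulus divides `n`, so
`∑ d ∣ n, b₂ d` is the number of characters modulo `n` with `χ ^ 2 = 1`; by duality this is the
number of square roots of `1` modulo `n`. The Chinese remainder theorem and Möbius inversion
then show that `b₂` is multiplicative, and counting square roots of `1` modulo prime powers gives
`b₂ (p ^ e) = 1, 1, 0, 0, …` for odd `p` and `b₂ (2 ^ e) = 1, 0, 1, 2, 0, 0, …`. Hence the Euler
factors of `∑ b₂ n / n ^ s` at odd primes are the factors `1 + p ^ (-s)` of `ζ s / ζ (2 * s)`, and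
only the factor at `2` differs.
-/

theorem card_rootsOfUnity_prod (k : ℕ) (M N : Type*) [CommMonoid M] [CommMonoid N] :
    Nat.card (rootsOfUnity k (M × N)) =
      Nat.card (rootsOfUnity k M) * Nat.card (rootsOfUnity k N) := by
  have hmem (u : (M × N)ˣ) : u ∈ rootsOfUnity k (M × N) ↔
      MulEquiv.prodUnits u ∈ (rootsOfUnity k M).prod (rootsOfUnity k N) := by
    simp [Subgroup.mem_prod, mem_rootsOfUnity, ← MulEquiv.map_eq_one_iff MulEquiv.prodUnits,
      Prod.ext_iff]
  rw [← Nat.card_prod]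
  exact Nat.card_congr ((MulEquiv.prodUnits.toEquiv.subtypeEquiv hmem).trans
    (Subgroup.prodEquiv _ _).toEquiv)

theorem card_rootsOfUnity_zmod_mul (k : ℕ) {m n : ℕ} (h : m.Coprime n) :
    Nat.card (rootsOfUnity k (ZMod (m * n))) =
      Nat.card (rootsOfUnity k (ZMod m)) * Nat.card (rootsOfUnity k (ZMod n)) := by
  rw [← card_rootsOfUnity_prod]
  exact Nat.card_congr ((ZMod.chineseRemainder h).toMulEquiv.restrictRootsOfUnity k).toEquiv

theorem card_rootsOfUnity_zmod_of_isCyclic (k n : ℕ) [NeZero n] [IsCyclic (ZMod n)ˣ] :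
    Nat.card (rootsOfUnity k (ZMod n)) = n.totient.gcd k := by
  rw [rootsOfUnity_eq_ker, IsCyclic.card_powMonoidHom_ker, Nat.card_eq_fintype_card,
    ZMod.card_units_eq_totient]

theorem card_rootsOfUnity_two_zmod_odd_prime_pow {p : ℕ} (hp : p.Prime) (hp2 : p ≠ 2) {e : ℕ}
    (he : e ≠ 0) : Nat.card (rootsOfUnity 2 (ZMod (p ^ e))) = 2 := by
  have : NeZero p := ⟨hp.ne_zero⟩
  have : IsCyclic (ZMod (p ^ e))ˣ := ZMod.isCyclic_units_of_prime_pow p hp hp2 e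
  have hlt : 2 < p ^ e := (hp.two_le.lt_of_ne' hp2).trans_le (Nat.le_self_pow he p)
  rw [card_rootsOfUnity_zmod_of_isCyclic, Nat.gcd_eq_right (Nat.totient_even hlt).two_dvd]

theorem card_rootsOfUnity_two_zmod_two : Nat.card (rootsOfUnity 2 (ZMod 2)) = 1 := by
  have := ZMod.isCyclic_units_two
  rw [card_rootsOfUnity_zmod_of_isCyclic, Nat.totient_two, Nat.gcd_one_left]

theorem card_rootsOfUnity_two_zmod_four : Nat.card (rootsOfUnity 2 (ZMod 4)) = 2 := by
  have := ZMod.isCyclic_units_four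
  rw [card_rootsOfUnity_zmod_of_isCyclic]
  decide

theorem two_pow_dvd_sq_sub_one_iff {k : ℕ} {a : ℤ} :
    (2 : ℤ) ^ (k + 3) ∣ a ^ 2 - 1 ↔ (2 : ℤ) ^ (k + 2) ∣ a - 1 ∨ (2 : ℤ) ^ (k + 2) ∣ a + 1 := by
  constructor
  · intro h
    have h' : Even (a ^ 2 - 1) := (even_two.pow_of_ne_zero (by simp)).trans_dvd h
    obtain ⟨b, rfl⟩ : Odd a := by
      by_contra ha
      simp_all [parity_simps]
    have hb : (2 : ℤ) ^ (k + 1) ∣ b * (b + 1) := by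
      rw [show (2 * b + 1) ^ 2 - 1 = 2 ^ 2 * (b * (b + 1)) by ring,
        show (2 : ℤ) ^ (k + 3) = 2 ^ 2 * 2 ^ (k + 1) by ring] at h
      exact Int.dvd_of_mul_dvd_mul_left (by simp) h
    rw [pow_succ' _ (k + 1), add_sub_cancel_right, show 2 * b + 1 + 1 = 2 * (b + 1) by ring]
    by_cases h2 : (2 : ℤ) ∣ b
    · exact .inl (mul_dvd_mul_left 2 (Int.prime_two.pow_dvd_of_dvd_mul_right _ (by lia) hb))
    · exact .inr (mul_dvd_mul_left 2 (Int.prime_two.pow_dvd_of_dvd_mul_left _ h2 hb))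
  · rintro (⟨c, hc⟩ | ⟨c, hc⟩)
    · obtain rfl : a = 2 ^ (k + 2) * c + 1 := by lia
      exact ⟨c * (2 ^ (k + 1) * c + 1), by ring⟩
    · obtain rfl : a = 2 ^ (k + 2) * c - 1 := by lia
      exact ⟨c * (2 ^ (k + 1) * c - 1), by ring⟩

theorem mem_zpowers_neg_one_iff {G : Type*} [Group G] [HasDistribNeg G] {g : G} :
    g ∈ Subgroup.zpowers (-1) ↔ g = 1 ∨ g = -1 := by
  constructor
  · rintro ⟨n, rfl⟩
    simp only [neg_one_zpow_eq_ite]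
    split_ifs <;> simp
  · rintro (rfl | rfl)
    exacts [one_mem _, Subgroup.mem_zpowers _]

theorem rootsOfUnity_two_zmod_two_pow (k : ℕ) :
    rootsOfUnity 2 (ZMod (2 ^ (k + 3))) =
      (Subgroup.zpowers (-1)).comap (ZMod.unitsMap (pow_dvd_pow 2 (k + 2).le_succ)) := by
  ext u
  obtain ⟨a, ha⟩ := ZMod.intCast_surjective (u : ZMod (2 ^ (k + 3)))
  have hu : (u : ZMod (2 ^ (k + 3))) ^ 2 = 1 ↔ (2 : ℤ) ^ (k + 3) ∣ a ^ 2 - 1 := by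
    have := ZMod.intCast_zmod_eq_zero_iff_dvd (a ^ 2 - 1) (2 ^ (k + 3))
    push_cast at this
    rwa [ha, sub_eq_zero] at this
  have hone : (a : ZMod (2 ^ (k + 2))) = 1 ↔ (2 : ℤ) ^ (k + 2) ∣ a - 1 := by
    simpa [sub_eq_zero] using ZMod.intCast_zmod_eq_zero_iff_dvd (a - 1) (2 ^ (k + 2))
  have hneg_one : (a : ZMod (2 ^ (k + 2))) = -1 ↔ (2 : ℤ) ^ (k + 2) ∣ a + 1 := by
    simpa [add_eq_zero_iff_eq_neg] using
      ZMod.intCast_zmod_eq_zero_iff_dvd (a + 1) (2 ^ (k + 2))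
  rw [mem_rootsOfUnity', hu, two_pow_dvd_sq_sub_one_iff, ← hone, ← hneg_one, Subgroup.mem_comap,
    mem_zpowers_neg_one_iff, Units.ext_iff, Units.ext_iff, ZMod.unitsMap_val, ← ha,
    ZMod.cast_intCast (pow_dvd_pow 2 (k + 2).le_succ), Units.val_neg, Units.val_one]

theorem card_zpowers_neg_one_units_zmod {n : ℕ} (hn : 2 < n) :
    Nat.card (Subgroup.zpowers (-1 : (ZMod n)ˣ)) = 2 := by
  have : Fact (2 < n) := ⟨hn⟩
  rw [Nat.card_zpowers]
  refine orderOf_eq_prime (by simp) fun h ↦ ZMod.neg_one_ne_one (n := n) ?_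
  simpa using congrArg Units.val h

theorem card_units_zmod_two_pow_succ (k : ℕ) : Nat.card (ZMod (2 ^ (k + 1)))ˣ = 2 ^ k := by
  rw [Nat.card_eq_fintype_card, ZMod.card_units_eq_totient,
    Nat.totient_prime_pow_succ Nat.prime_two, Nat.add_one_sub_one, mul_one]

theorem card_rootsOfUnity_two_zmod_two_pow (k : ℕ) :
    Nat.card (rootsOfUnity 2 (ZMod (2 ^ (k + 3)))) = 4 := by
  set H := Subgroup.zpowers (-1 : (ZMod (2 ^ (k + 2)))ˣ)
  have hlt : 2 < 2 ^ (k + 2) := lt_self_pow₀ one_lt_two (by lia)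
  have hindex : (rootsOfUnity 2 (ZMod (2 ^ (k + 3)))).index = H.index := by
    rw [rootsOfUnity_two_zmod_two_pow,
      Subgroup.index_comap_of_surjective _ (ZMod.unitsMap_surjective _)]
  refine mul_right_cancel₀ (b := H.index) Subgroup.index_ne_zero_of_finite ?_
  calc Nat.card (rootsOfUnity 2 (ZMod (2 ^ (k + 3)))) * H.index
    _ = 2 ^ (k + 2) := by rw [← hindex, Subgroup.card_mul_index, card_units_zmod_two_pow_succ]
    _ = 2 * (Nat.card H * H.index) := by
      rw [Subgroup.card_mul_index, card_units_zmod_two_pow_succ, pow_succ']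
    _ = 4 * H.index := by rw [card_zpowers_neg_one_units_zmod hlt]; ring

theorem card_mulChar_pow_eq_one (k : ℕ) (M R : Type*) [CommMonoid M] [Finite M] [CommRing R]
    [HasEnoughRootsOfUnity R (Monoid.exponent Mˣ)] :
    Nat.card {χ : MulChar M R // χ ^ k = 1} = Nat.card (rootsOfUnity k M) := by
  obtain ⟨e⟩ := MulChar.mulEquiv_units M R
  exact Nat.card_congr <| e.toEquiv.subtypeEquiv fun χ ↦ by simp [mem_rootsOfUnity, ← map_pow]

section Conductor

open DirichletCharacter

variable {R : Type*} [CommMonoidWithZero R] {n : ℕ} [NeZero n]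

theorem card_pow_eq_one_and_conductor_eq {d : ℕ} (hd : d ∣ n) (k : ℕ) :
    Nat.card {χ : DirichletCharacter R n // χ ^ k = 1 ∧ χ.conductor = d} =
      Nat.card {χ : DirichletCharacter R d // χ.IsPrimitive ∧ χ ^ k = 1} := by
  symm
  have hpow (χ : DirichletCharacter R d) : changeLevel hd χ ^ k = 1 ↔ χ ^ k = 1 := by
    rw [← map_pow, changeLevel_eq_one_iff]
  refine Nat.card_congr <| Equiv.ofBijective
    (fun χ ↦ ⟨changeLevel hd χ.1, (hpow _).2 χ.2.2, (conductor_changeLevel _ hd).trans χ.2.1⟩)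
    ⟨fun χ ψ h ↦ Subtype.ext (changeLevel_injective hd (congrArg Subtype.val h)), ?_⟩
  rintro ⟨χ, hχ, rfl⟩
  have hlevel := χ.changeLevel_primitiveCharacter
  exact ⟨⟨χ.primitiveCharacter, χ.primitiveCharacter_isPrimitive, (hpow _).1 (by rw [hlevel, hχ])⟩,
    Subtype.ext hlevel⟩

variable (R n) in
theorem sum_divisors_card_isPrimitive_pow_eq_one [Finite (DirichletCharacter R n)] (k : ℕ) :
    ∑ d ∈ n.divisors, Nat.card {χ : DirichletCharacter R d // χ.IsPrimitive ∧ χ ^ k = 1} =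
      Nat.card {χ : DirichletCharacter R n // χ ^ k = 1} := by
  classical
  have := Fintype.ofFinite (DirichletCharacter R n)
  rw [Nat.card_eq_fintype_card, Fintype.card_subtype,
    Finset.card_eq_sum_card_fiberwise (f := conductor) (t := n.divisors)
      fun χ _ ↦ by simp [NeZero.ne n, χ.conductor_dvd_level]]
  refine Finset.sum_congr rfl fun d hd ↦ ?_
  rw [← card_pow_eq_one_and_conductor_eq (Nat.dvd_of_mem_divisors hd), Nat.card_eq_fintype_card,
    Fintype.card_subtype, Finset.filter_filter]

end Conductor

theorem sum_divisors_b₂ (n : ℕ) [NeZero n] :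
    ∑ d ∈ n.divisors, b₂ d = Nat.card (rootsOfUnity 2 (ZMod n)) := by
  rw [← card_mulChar_pow_eq_one 2 (ZMod n) ℂ]
  exact sum_divisors_card_isPrimitive_pow_eq_one ℂ n 2

theorem b₂_one : b₂ 1 = 1 := by
  simpa using sum_divisors_b₂ 1

section Multiplicativity

open ArithmeticFunction
open scoped ArithmeticFunction.zeta

theorem isMultiplicative_of_zeta_mul {R : Type*} [CommRing R] {f : ArithmeticFunction R}
    (hf : (ζ * f : ArithmeticFunction R).IsMultiplicative) : f.IsMultiplicative := by
  simpa [← mul_assoc, coe_moebius_mul_coe_zeta] using isMultiplicative_moebius.intCast.mul hf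

theorem b₂_mul_of_coprime {m n : ℕ} (h : m.Coprime n) : b₂ (m * n) = b₂ m * b₂ n := by
  -- `b₂ 0 = 2`, so `b₂` has to be modified at `0` to become an `ArithmeticFunction`.
  set f : ArithmeticFunction ℤ := toArithmeticFunction fun n ↦ (b₂ n : ℤ)
  have hf {n : ℕ} (hn : n ≠ 0) : f n = b₂ n := if_neg hn
  have hζ {n : ℕ} (hn : n ≠ 0) : (ζ * f : ArithmeticFunction ℤ) n =
      Nat.card (rootsOfUnity 2 (ZMod n)) := by
    have : NeZero n := ⟨hn⟩
    rw [coe_zeta_mul_apply, ← sum_divisors_b₂, Nat.cast_sum]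
    exact Finset.sum_congr rfl fun d hd ↦ hf (Nat.pos_of_mem_divisors hd).ne'
  have hmul : f.IsMultiplicative := isMultiplicative_of_zeta_mul <|
    IsMultiplicative.iff_ne_zero.mpr ⟨by simp [hζ], fun hm hn hmn ↦ by
      rw [hζ hm, hζ hn, hζ (mul_ne_zero hm hn), card_rootsOfUnity_zmod_mul 2 hmn, Nat.cast_mul]⟩
  rcases eq_or_ne m 0 with rfl | hm
  · simp [(Nat.coprime_zero_left n).mp h, b₂_one]
  rcases eq_or_ne n 0 with rfl | hn
  · simp [(Nat.coprime_zero_right m).mp h, b₂_one]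
  have := hmul.map_mul_of_coprime h
  rw [hf hm, hf hn, hf (mul_ne_zero hm hn)] at this
  exact_mod_cast this

end Multiplicativity

theorem b₂_prime_pow_succ_add {p : ℕ} (hp : p.Prime) (k : ℕ) :
    b₂ (p ^ (k + 1)) + Nat.card (rootsOfUnity 2 (ZMod (p ^ k))) =
      Nat.card (rootsOfUnity 2 (ZMod (p ^ (k + 1)))) := by
  have : NeZero p := ⟨hp.ne_zero⟩
  rw [← sum_divisors_b₂, ← sum_divisors_b₂, Nat.sum_divisors_prime_pow hp,
    Nat.sum_divisors_prime_pow hp, Finset.sum_range_succ _ (k + 1), add_comm]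

theorem b₂_odd_prime {p : ℕ} (hp : p.Prime) (hp2 : p ≠ 2) : b₂ p = 1 := by
  have : b₂ (p ^ 1) + Nat.card (rootsOfUnity 2 (ZMod 1)) =
      Nat.card (rootsOfUnity 2 (ZMod (p ^ 1))) := b₂_prime_pow_succ_add hp 0
  rw [card_rootsOfUnity_two_zmod_odd_prime_pow hp hp2 one_ne_zero, Nat.card_unique, pow_one] at this
  lia

theorem b₂_odd_prime_pow_add_two {p : ℕ} (hp : p.Prime) (hp2 : p ≠ 2) (k : ℕ) :
    b₂ (p ^ (k + 2)) = 0 := by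
  have := b₂_prime_pow_succ_add hp (k + 1)
  rw [card_rootsOfUnity_two_zmod_odd_prime_pow hp hp2 (by simp),
    card_rootsOfUnity_two_zmod_odd_prime_pow hp hp2 (by simp)] at this
  simpa using this

theorem b₂_two : b₂ 2 = 0 := by
  simpa [card_rootsOfUnity_two_zmod_two] using b₂_prime_pow_succ_add Nat.prime_two 0

theorem b₂_four : b₂ 4 = 1 := by
  have : b₂ 4 + Nat.card (rootsOfUnity 2 (ZMod 2)) = Nat.card (rootsOfUnity 2 (ZMod 4)) :=
    b₂_prime_pow_succ_add Nat.prime_two 1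
  rw [card_rootsOfUnity_two_zmod_two, card_rootsOfUnity_two_zmod_four] at this
  lia

theorem b₂_eight : b₂ 8 = 2 := by
  have : b₂ 8 + Nat.card (rootsOfUnity 2 (ZMod 4)) = Nat.card (rootsOfUnity 2 (ZMod (2 ^ 3))) :=
    b₂_prime_pow_succ_add Nat.prime_two 2
  rw [card_rootsOfUnity_two_zmod_four, card_rootsOfUnity_two_zmod_two_pow 0] at this
  lia

theorem b₂_two_pow_add_four (k : ℕ) : b₂ (2 ^ (k + 4)) = 0 := by
  have := b₂_prime_pow_succ_add Nat.prime_two (k + 3)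
  rw [card_rootsOfUnity_two_zmod_two_pow, card_rootsOfUnity_two_zmod_two_pow (k + 1)] at this
  simpa using this

theorem b₂_two_pow_le_two (k : ℕ) : b₂ (2 ^ k) ≤ 2 := by
  match k with
  | 0 => simp [b₂_one]
  | 1 => simp [b₂_two]
  | 2 => simp [b₂_four]
  | 3 => simp [b₂_eight]
  | k + 4 => simp [b₂_two_pow_add_four]

theorem b₂_le_one_of_odd {n : ℕ} (hn : Odd n) : b₂ n ≤ 1 := by
  induction n using Nat.recOnPosPrimePosCoprime with
  | zero => simp at hn
  | one => exact b₂_one.le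
  | prime_pow p e hp he =>
    have hp2 : p ≠ 2 := by
      rintro rfl
      exact Nat.not_odd_iff_even.mpr (even_two.pow_of_ne_zero he.ne') hn
    match e with
    | 1 => simp [b₂_odd_prime hp hp2]
    | k + 2 => simp [b₂_odd_prime_pow_add_two hp hp2]
  | coprime a b _ _ hab iha ihb =>
    rw [Nat.odd_mul] at hn
    rw [b₂_mul_of_coprime hab]
    exact Nat.mul_le_mul (iha hn.1) (ihb hn.2)

theorem b₂_le_two {n : ℕ} (hn : n ≠ 0) : b₂ n ≤ 2 := by
  obtain ⟨k, m, hm, rfl⟩ := Nat.exists_eq_two_pow_mul_odd hn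
  rw [b₂_mul_of_coprime (hm.coprime_two_left.pow_left k)]
  exact Nat.mul_le_mul (b₂_two_pow_le_two k) (b₂_le_one_of_odd hm)

theorem lseriesSummable_b₂ {s : ℂ} (hs : 1 < s.re) : LSeriesSummable (fun n ↦ (b₂ n : ℂ)) s :=
  LSeriesSummable_of_bounded_of_one_lt_re (m := 2)
    (fun n hn ↦ by rw [Complex.norm_natCast]; exact_mod_cast b₂_le_two hn) hs

section PowerSeries

variable {R : Type*} [Semiring R] [TopologicalSpace R]

theorem hasSum_b₂_odd_prime_pow_mul_pow {p : ℕ} (hp : p.Prime) (hp2 : p ≠ 2) (x : R) :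
    HasSum (fun e ↦ (b₂ (p ^ e) : R) * x ^ e) (1 + x) := by
  have h : HasSum (fun e ↦ (b₂ (p ^ e) : R) * x ^ e) _ :=
    hasSum_sum_of_ne_finset_zero (s := Finset.range 2) fun e he ↦ by
      obtain ⟨k, rfl⟩ := Nat.exists_eq_add_of_le' (not_lt.mp (Finset.mem_range.not.mp he))
      simp [b₂_odd_prime_pow_add_two hp hp2]
  simpa [Finset.sum_range_succ, b₂_one, b₂_odd_prime hp hp2] using h

theorem hasSum_b₂_two_pow_mul_pow (x : R) :
    HasSum (fun e ↦ (b₂ (2 ^ e) : R) * x ^ e) (1 + x ^ 2 + 2 * x ^ 3) := by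
  have h : HasSum (fun e ↦ (b₂ (2 ^ e) : R) * x ^ e) _ :=
    hasSum_sum_of_ne_finset_zero (s := Finset.range 4) fun e he ↦ by
      obtain ⟨k, rfl⟩ := Nat.exists_eq_add_of_le' (not_lt.mp (Finset.mem_range.not.mp he))
      simp [b₂_two_pow_add_four]
  simpa [Finset.sum_range_succ, b₂_one, b₂_two, b₂_four, b₂_eight] using h

end PowerSeries

theorem cpow_neg_natCast_mul (x : ℂ) (k : ℕ) (s : ℂ) : x ^ (-(k * s)) = (x ^ (-s)) ^ k := by
  rw [← Complex.cpow_nat_mul, mul_neg]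

theorem LSeries_eulerProduct_hasProd_of_multiplicative {f : ℕ → ℂ} (hf₁ : f 1 = 1)
    (hf : ∀ {m n : ℕ}, m.Coprime n → f (m * n) = f m * f n) {s : ℂ} (hs : LSeriesSummable f s) :
    HasProd (fun p : Nat.Primes ↦ ∑' e, f (p ^ e) * ((p : ℂ) ^ (-s)) ^ e) (LSeries f s) := by
  have hmul {m n : ℕ} (h : m.Coprime n) :
      LSeries.term f s (m * n) = LSeries.term f s m * LSeries.term f s n := by
    rcases eq_or_ne m 0 with rfl | hm
    · simp
    rcases eq_or_ne n 0 with rfl | hn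
    · simp
    rw [LSeries.term_of_ne_zero (mul_ne_zero hm hn), LSeries.term_of_ne_zero hm,
      LSeries.term_of_ne_zero hn, hf h, Nat.cast_mul, Complex.natCast_mul_natCast_cpow,
      mul_div_mul_comm]
  have hterm (p : Nat.Primes) (e : ℕ) :
      LSeries.term f s (p ^ e) = f (p ^ e) * ((p : ℂ) ^ (-s)) ^ e := by
    rw [LSeries.term_of_ne_zero (pow_ne_zero _ p.prop.ne_zero), div_eq_mul_inv, ← Complex.cpow_neg,
      Nat.cast_pow, ← Complex.natCast_cpow_natCast_mul, Complex.cpow_nat_mul]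
  simpa only [hterm] using! EulerProduct.eulerProduct_hasProd (by simp [LSeries.term, hf₁]) hmul
    hs.norm (LSeries.term_zero f s)

theorem one_add_natCast_cpow_neg_ne_zero {n : ℕ} (hn : 1 < n) {s : ℂ} (hs : 0 < s.re) :
    1 + (n : ℂ) ^ (-s) ≠ 0 := by
  intro h
  have hlt : ‖(n : ℂ) ^ (-s)‖ < 1 := by
    rw [Complex.norm_natCast_cpow_of_pos (one_pos.trans hn), Complex.neg_re]
    exact Real.rpow_lt_one_of_one_lt_of_neg (mod_cast hn) (neg_neg_of_pos hs)
  simp [eq_neg_of_add_eq_zero_right h] at hlt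

theorem riemannZeta_div_riemannZeta_two_mul_hasProd {s : ℂ} (hs : 1 < s.re) :
    HasProd (fun p : Nat.Primes ↦ 1 + (p : ℂ) ^ (-s)) (riemannZeta s / riemannZeta (2 * s)) := by
  have hs2 : 1 < (2 * s).re := by rw [← Complex.ofReal_ofNat, Complex.re_ofReal_mul]; linarith
  convert! (riemannZeta_eulerProduct_hasProd hs).div₀ (riemannZeta_eulerProduct_hasProd hs2)
    (riemannZeta_ne_zero_of_one_lt_re hs2) using 2 with p
  have hp := Complex.one_sub_prime_cpow_ne_zero p.prop hs
  have := cpow_neg_natCast_mul p 2 s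
  push_cast at this
  rw [this]
  field_simp
  ring

theorem b₂_LSeries_eq_mul_riemannZeta_div {s : ℂ} (hs : 1 < s.re) :
    LSeries (fun n ↦ (b₂ n : ℂ)) s =
      (1 + ((2 : ℂ) ^ (-s)) ^ 2 + 2 * ((2 : ℂ) ^ (-s)) ^ 3) / (1 + (2 : ℂ) ^ (-s)) *
        (riemannZeta s / riemannZeta (2 * s)) := by
  classical
  set c := (1 + ((2 : ℂ) ^ (-s)) ^ 2 + 2 * ((2 : ℂ) ^ (-s)) ^ 3) / (1 + (2 : ℂ) ^ (-s))
  have htwo : 1 + (2 : ℂ) ^ (-s) ≠ 0 :=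
    mod_cast one_add_natCast_cpow_neg_ne_zero one_lt_two (one_pos.trans hs)
  have hL := LSeries_eulerProduct_hasProd_of_multiplicative (by simp [b₂_one])
    (fun h ↦ by rw [b₂_mul_of_coprime h, Nat.cast_mul]) (lseriesSummable_b₂ hs)
  have hlocal (p : Nat.Primes) : ∑' e, (b₂ (p ^ e) : ℂ) * ((p : ℂ) ^ (-s)) ^ e =
      (if p = ⟨2, Nat.prime_two⟩ then c else 1) * (1 + (p : ℂ) ^ (-s)) := by
    split_ifs with hp
    · subst hp
      rw [(hasSum_b₂_two_pow_mul_pow _).tsum_eq, Nat.cast_two, div_mul_cancel₀ _ htwo]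
    · have hp2 : (p : ℕ) ≠ 2 := fun h ↦ hp (Subtype.ext h)
      rw [one_mul, (hasSum_b₂_odd_prime_pow_mul_pow p.prop hp2 _).tsum_eq]
  simp only [hlocal] at hL
  exact hL.unique <| (hasProd_ite_eq _ c).mul (riemannZeta_div_riemannZeta_two_mul_hasProd hs)

theorem b₂_LSeries_eq (s : ℂ) (hs : 1 < s.re) :
    LSeries (fun n => (b₂ n : ℂ)) s =
      (1 + (2 : ℂ) ^ (-(2 * s)) + 2 * (2 : ℂ) ^ (-(3 * s))) * (1 - (2 : ℂ) ^ (-s)) *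
        riemannZeta s * (1 - (2 : ℂ) ^ (-(2 * s)))⁻¹ * (riemannZeta (2 * s))⁻¹ := by
  have h2 : (2 : ℂ) ^ (-(2 * s)) = (2 ^ (-s)) ^ 2 := mod_cast cpow_neg_natCast_mul 2 2 s
  have h3 : (2 : ℂ) ^ (-(3 * s)) = (2 ^ (-s)) ^ 3 := mod_cast cpow_neg_natCast_mul 2 3 s
  have hsub : 1 - (2 : ℂ) ^ (-s) ≠ 0 :=
    mod_cast Complex.one_sub_prime_cpow_ne_zero Nat.prime_two hs
  have hfactor : 1 - ((2 : ℂ) ^ (-s)) ^ 2 = (1 + 2 ^ (-s)) * (1 - 2 ^ (-s)) := by ring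
  rw [b₂_LSeries_eq_mul_riemannZeta_div hs, h2, h3, hfactor]
  field_simp
end

section
/- As real s → 1 from the right, (s - 1) · ∏_{p prime, p ≡ 5 (mod 8)} (1 - p^{-s})^{-4} converges to (1/(2·ln(1 + √2))) · ∏_{p prime, p ≡ 5 (mod 8)} (1 - p^{-2})^{-2}. -/
/-!
The identity behind the theorem is a comparison of Euler products. With `x = p ^ (-s)`, the factor
at `p` of `L(1, s) L(χ₄, s) / (L(χ₈, s) L(χ₈', s))`, where `1` is the trivial character mod `2`,
equals `1` unless `p ≡ 5 (mod 8)`, in which case it is `(1 - x ^ 2) ^ 2 / (1 - x) ^ 4`. Hence, for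
the Euler product `P` over the primes `p ≡ 5 (mod 8)`,
`(s - 1) P(s) ^ 4 = (s - 1) L(1, s) L(χ₄, s) P(2 s) ^ 2 / (L(χ₈, s) L(χ₈', s))`.

The trivial character contributes the residue `1 / 2`. For the others, `Γ(s) L(a, s)` is the Mellin
transform of `e ^ (-t) g(e ^ (-t))`, where `g(x) = ∑ a(n + 1) x ^ n`, so that `L(a, s)` tends to
`∫₀¹ g` as `s → 1`. For `χ₄`, `χ₈` and `χ₈'` this is the integral of a rational function, equal to
`π / 4`, `log (1 + √2) / √2` and `π / (2 √2)` respectively.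
-/

open Complex Filter Set Topology
open MeasureTheory (integral_Ioc_eq_integral_Ioo integral_image_eq_integral_abs_deriv_smul)
open ZMod (χ₄ χ₈ χ₈' χ₄_nat_eq_if_mod_four χ₈_nat_eq_if_mod_eight χ₈'_nat_eq_if_mod_eight)

theorem hasSum_mul_pow_of_periodic {𝕜 : Type*} [NormedField 𝕜] [CompleteSpace 𝕜] {N : ℕ}
    (hN : N ≠ 0) {f : ℕ → 𝕜} (hf : Function.Periodic f N) {x : 𝕜} (hx : ‖x‖ < 1) :
    HasSum (fun n => f n * x ^ n) ((∑ r ∈ Finset.range N, f r * x ^ r) / (1 - x ^ N)) := by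
  have hbound (n : ℕ) : ‖f n‖ ≤ ∑ r ∈ Finset.range N, ‖f r‖ := by
    rw [← hf.map_mod_nat n]
    exact Finset.single_le_sum (f := fun r => ‖f r‖) (fun _ _ => norm_nonneg _)
      (Finset.mem_range.mpr (n.mod_lt (Nat.pos_of_ne_zero hN)))
  have hsum : Summable fun n => f n * x ^ n := by
    refine .of_norm_bounded ((summable_geometric_of_lt_one (norm_nonneg x) hx).mul_left
      (∑ r ∈ Finset.range N, ‖f r‖)) fun n => ?_
    rw [norm_mul, norm_pow]
    gcongr
    exact hbound n
  have hne : 1 - x ^ N ≠ 0 := by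
    refine sub_ne_zero.mpr fun h => (pow_lt_one₀ (norm_nonneg x) hx hN).ne ?_
    rw [← norm_pow, ← h, norm_one]
  have htail : ∑' n, f (n + N) * x ^ (n + N) = x ^ N * ∑' n, f n * x ^ n := by
    rw [← tsum_mul_left]
    exact tsum_congr fun n => by rw [hf n]; ring
  convert hsum.hasSum using 1
  rw [div_eq_iff hne]
  linear_combination hsum.sum_add_tsum_nat_add N - htail

section MellinExp

variable {E : Type*} [NormedAddCommGroup E] [NormedSpace ℂ E] {g : ℝ → E}

theorem image_exp_neg_Ioi_zero : (fun t => Real.exp (-t)) '' Ioi 0 = Ioo 0 1 := by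
  ext x
  refine ⟨?_, fun hx => ⟨-Real.log x, ?_, ?_⟩⟩
  · rintro ⟨t, ht, rfl⟩
    exact ⟨Real.exp_pos _, by simpa using ht⟩
  · exact neg_pos.mpr (Real.log_neg hx.1 hx.2)
  · simp [Real.exp_log hx.1]

theorem mellin_exp_neg_smul_comp_exp_neg_one :
    mellin (fun t => Real.exp (-t) • g (Real.exp (-t))) 1 = ∫ x in (0 : ℝ)..1, g x := by
  have hderiv (t : ℝ) : HasDerivAt (fun t => Real.exp (-t)) (-Real.exp (-t)) t := by
    simpa using (hasDerivAt_neg t).exp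
  rw [intervalIntegral.integral_of_le zero_le_one, integral_Ioc_eq_integral_Ioo,
    ← image_exp_neg_Ioi_zero, integral_image_eq_integral_abs_deriv_smul measurableSet_Ioi
      (fun t _ => (hderiv t).hasDerivWithinAt) (Real.exp_injective.comp neg_injective).injOn]
  simp [mellin]

theorem differentiableAt_mellin_exp_neg_smul_comp_exp_neg (hg : ContinuousOn g (Icc 0 1)) {s : ℂ}
    (hs : 0 < s.re) :
    DifferentiableAt ℂ (mellin fun t => Real.exp (-t) • g (Real.exp (-t))) s := by
  have hmaps : MapsTo (fun t => Real.exp (-t)) (Ioi 0) (Icc 0 1) :=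
    (mapsTo_image _ _).mono_right (image_exp_neg_Ioi_zero.trans_subset Ioo_subset_Icc_self)
  have hcont : ContinuousOn (fun t => Real.exp (-t) • g (Real.exp (-t))) (Ioi 0) :=
    (by fun_prop : Continuous fun t => Real.exp (-t)).continuousOn.smul
      (hg.comp (by fun_prop) hmaps)
  obtain ⟨C, hC⟩ := isCompact_Icc.exists_bound_of_continuousOn hg
  have hle {t : ℝ} (ht : 0 < t) :
      ‖Real.exp (-t) • g (Real.exp (-t))‖ ≤ C * ‖Real.exp (-t)‖ := by
    rw [norm_smul, mul_comm]
    gcongr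
    exact hC _ (hmaps ht)
  refine mellin_differentiableAt_of_isBigO_rpow_exp one_pos
    (hcont.locallyIntegrableOn measurableSet_Ioi) (b := 0) (.of_bound C ?_) (.of_bound C ?_) hs
  · filter_upwards [eventually_gt_atTop 0] with t ht
    simpa using hle ht
  · filter_upwards [self_mem_nhdsWithin] with t ht
    refine (hle ht).trans ?_
    have hC0 : 0 ≤ C := (norm_nonneg _).trans (hC _ (hmaps ht))
    gcongr
    simpa [abs_of_pos (Real.exp_pos _)] using (mem_Ioi.mp ht).le

end MellinExp

section Abel

variable {a : ℕ → ℂ} {g : ℝ → ℂ}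

theorem Gamma_mul_LSeries_eq_mellin {s : ℂ} (hs : 0 < s.re) (ha : LSeriesSummable a s)
    (hag : ∀ x ∈ Ioo (0 : ℝ) 1, HasSum (fun n => a (n + 1) * (x : ℂ) ^ n) (g x)) :
    Gamma s * LSeries a s = mellin (fun t => Real.exp (-t) • g (Real.exp (-t))) s := by
  have hterm (n : ℕ) : LSeries.term a s (n + 1) = a (n + 1) / ((n + 1 : ℝ) : ℂ) ^ s := by
    simp
  have hL : HasSum (fun n : ℕ => Gamma s * a (n + 1) / ((n + 1 : ℝ) : ℂ) ^ s)
      (Gamma s * LSeries a s) := by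
    have := (hasSum_nat_add_iff' 1).mpr ha.LSeriesHasSum
    simpa [hterm, mul_div_assoc] using this.mul_left (Gamma s)
  refine hL.unique (hasSum_mellin (fun n => .inr (by positivity)) hs (fun t ht => ?_) ?_)
  · have hx : Real.exp (-t) ∈ Ioo 0 1 := image_exp_neg_Ioi_zero ▸ mem_image_of_mem _ ht
    convert (hag _ hx).const_smul (Real.exp (-t)) using 2 with n
    rw [real_smul, mul_left_comm, ← ofReal_pow, ← ofReal_mul, ← Real.exp_nat_mul, ← Real.exp_add]
    ring_nf
  · have := (summable_nat_add_iff 1).mpr ha.norm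
    refine this.congr fun n => ?_
    rw [hterm, norm_div, norm_cpow_eq_rpow_re_of_pos (by positivity)]

theorem tendsto_LSeries_integral (ha : LSeries.abscissaOfAbsConv a ≤ 1)
    (hg : ContinuousOn g (Icc 0 1))
    (hag : ∀ x ∈ Ioo (0 : ℝ) 1, HasSum (fun n => a (n + 1) * (x : ℂ) ^ n) (g x)) :
    Tendsto (LSeries a) (𝓝[{s | 1 < s.re}] 1) (𝓝 (∫ x in (0 : ℝ)..1, g x)) := by
  have hmellin := (differentiableAt_mellin_exp_neg_smul_comp_exp_neg hg
    (s := 1) (by simp)).continuousAt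
  have hGamma : ContinuousAt Gamma 1 := differentiableAt_Gamma_one.continuousAt
  have hlim := (hmellin.div hGamma (by simp)).tendsto.mono_left
    (nhdsWithin_le_nhds (s := {s : ℂ | 1 < s.re}))
  rw [Pi.div_apply, mellin_exp_neg_smul_comp_exp_neg_one, Gamma_one, div_one] at hlim
  refine hlim.congr' ?_
  filter_upwards [self_mem_nhdsWithin] with s (hs : 1 < s.re)
  have hs0 : 0 < s.re := one_pos.trans hs
  have hsum : LSeriesSummable a s :=
    LSeriesSummable_of_abscissaOfAbsConv_lt_re (ha.trans_lt (by exact_mod_cast hs))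
  rw [Pi.div_apply, ← Gamma_mul_LSeries_eq_mellin hs0 hsum hag,
    mul_div_cancel_left₀ _ (Gamma_ne_zero_of_re_pos hs0)]

end Abel

theorem tendsto_LSeries_dirichletCharacter_integral {N : ℕ} (hN : N ≠ 0)
    (χ : DirichletCharacter ℂ N) {g : ℝ → ℂ} (hg : ContinuousOn g (Icc 0 1))
    (hχg : ∀ x ∈ Ioo (0 : ℝ) 1,
      g x * (1 - x ^ N) = ∑ r ∈ Finset.range N, χ ((r + 1 : ℕ) : ZMod N) * x ^ r) :
    Tendsto (LSeries (χ ·)) (𝓝[{s | 1 < s.re}] 1) (𝓝 (∫ x in (0 : ℝ)..1, g x)) := by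
  refine tendsto_LSeries_integral (χ.absicssaOfAbsConv_eq_one hN).le hg fun x hx => ?_
  have hperiodic : Function.Periodic (fun n : ℕ => χ ((n + 1 : ℕ) : ZMod N)) N := fun n => by
    simp
  have hnorm : ‖(x : ℂ)‖ < 1 := by
    simpa [abs_of_pos hx.1] using hx.2
  have hne : 1 - (x : ℂ) ^ N ≠ 0 := by
    exact_mod_cast (sub_pos.mpr (pow_lt_one₀ hx.1.le hx.2 hN)).ne'
  rw [eq_div_of_mul_eq hne (hχg x hx)]
  exact hasSum_mul_pow_of_periodic hN hperiodic hnorm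

/-- An integer-valued character mod `N`, regarded as a complex Dirichlet character: the quadratic
characters `χ₄`, `χ₈`, `χ₈'` take values in `ℤ`, whereas L-series have complex coefficients. -/
noncomputable abbrev complexChar {N : ℕ} (χ : MulChar (ZMod N) ℤ) : DirichletCharacter ℂ N :=
  χ.ringHomComp (Int.castRingHom ℂ)

theorem tendsto_LSeries_complexChar_integral {N : ℕ} (hN : N ≠ 0) (χ : MulChar (ZMod N) ℤ)
    {g : ℝ → ℝ} (hg : ContinuousOn g (Icc 0 1))
    (hχg : ∀ x ∈ Ioo (0 : ℝ) 1,
      g x * (1 - x ^ N) = ∑ r ∈ Finset.range N, χ ((r + 1 : ℕ) : ZMod N) * x ^ r) :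
    Tendsto (LSeries (complexChar χ ·)) (𝓝[{s | 1 < s.re}] 1) (𝓝 (∫ x in (0 : ℝ)..1, g x : ℝ)) := by
  rw [← intervalIntegral.integral_ofReal]
  refine tendsto_LSeries_dirichletCharacter_integral hN _
    (continuous_ofReal.comp_continuousOn hg) fun x hx => ?_
  simpa [MulChar.ringHomComp_apply] using congrArg ((↑) : ℝ → ℂ) (hχg x hx)

theorem tendsto_LSeries_χ₄ :
    Tendsto (LSeries (complexChar χ₄ ·)) (𝓝[{s | 1 < s.re}] 1) (𝓝 (Real.pi / 4 : ℝ)) := by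
  have hint : ∫ x in (0 : ℝ)..1, 1 / (1 + x ^ 2) = Real.pi / 4 := by
    rw [integral_one_div_one_add_sq, Real.arctan_one, Real.arctan_zero, sub_zero]
  rw [← hint]
  refine tendsto_LSeries_complexChar_integral four_ne_zero χ₄
    (continuous_const.div (by fun_prop) fun x => by positivity).continuousOn fun x _ => ?_
  have hsum : ∑ r ∈ Finset.range 4, χ₄ ((r + 1 : ℕ) : ZMod 4) * x ^ r = 1 - x ^ 2 := by
    norm_num [Finset.sum_range_succ, χ₄_nat_eq_if_mod_four, sub_eq_add_neg]
  rw [hsum]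
  field_simp
  ring

theorem one_add_pow_four_eq_mul (x : ℝ) :
    1 + x ^ 4 = (1 + √2 * x + x ^ 2) * (1 - √2 * x + x ^ 2) := by
  linear_combination x ^ 2 * Real.sq_sqrt zero_le_two

theorem one_add_sqrt_two_mul_add_sq_pos (x : ℝ) : 0 < 1 + √2 * x + x ^ 2 := by
  nlinarith [sq_nonneg (√2 * x + 1), Real.sq_sqrt (zero_le_two (α := ℝ))]

theorem one_sub_sqrt_two_mul_add_sq_pos (x : ℝ) : 0 < 1 - √2 * x + x ^ 2 := by
  simpa [sub_eq_add_neg] using one_add_sqrt_two_mul_add_sq_pos (-x)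

theorem continuous_div_one_add_pow_four {f : ℝ → ℝ} (hf : Continuous f) :
    Continuous fun x => f x / (1 + x ^ 4) :=
  hf.div (by fun_prop) fun x => by positivity

theorem hasDerivAt_log_sub_log_div_two_mul_sqrt_two (x : ℝ) :
    HasDerivAt (fun x => (Real.log (1 + √2 * x + x ^ 2) - Real.log (1 - √2 * x + x ^ 2)) / (2 * √2))
      ((1 - x ^ 2) / (1 + x ^ 4)) x := by
  have hpos := one_add_sqrt_two_mul_add_sq_pos x
  have hneg := one_sub_sqrt_two_mul_add_sq_pos x
  have hadd : HasDerivAt (fun x : ℝ => 1 + √2 * x + x ^ 2) (√2 + 2 * x) x := by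
    simpa using (((hasDerivAt_id x).const_mul √2).const_add 1).fun_add (hasDerivAt_pow 2 x)
  have hsub : HasDerivAt (fun x : ℝ => 1 - √2 * x + x ^ 2) (-√2 + 2 * x) x := by
    simpa using (((hasDerivAt_id x).const_mul √2).const_sub 1).fun_add (hasDerivAt_pow 2 x)
  refine (((hadd.log hpos.ne').sub (hsub.log hneg.ne')).div_const (2 * √2)).congr_deriv ?_
  rw [one_add_pow_four_eq_mul]
  field_simp
  ring

theorem integral_one_sub_sq_div_one_add_pow_four :
    ∫ x in (0 : ℝ)..1, (1 - x ^ 2) / (1 + x ^ 4) = Real.log (1 + √2) / √2 := by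
  have hlog : Real.log (1 + √2 * 1 + 1 ^ 2) =
      2 * Real.log (1 + √2) + Real.log (1 - √2 * 1 + 1 ^ 2) := by
    have hfactor : 1 + √2 * 1 + 1 ^ 2 = (1 + √2) ^ 2 * (1 - √2 * 1 + 1 ^ 2) := by
      linear_combination √2 * Real.sq_sqrt zero_le_two
    rw [hfactor, Real.log_mul (by positivity) (one_sub_sqrt_two_mul_add_sq_pos 1).ne',
      Real.log_pow, Nat.cast_two]
  rw [intervalIntegral.integral_eq_sub_of_hasDerivAt
    (fun x _ => hasDerivAt_log_sub_log_div_two_mul_sqrt_two x)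
    ((continuous_div_one_add_pow_four (by fun_prop)).intervalIntegrable _ _), hlog]
  field_simp
  simp

theorem tendsto_LSeries_χ₈ :
    Tendsto (LSeries (complexChar χ₈ ·)) (𝓝[{s | 1 < s.re}] 1)
      (𝓝 (Real.log (1 + √2) / √2 : ℝ)) := by
  rw [← integral_one_sub_sq_div_one_add_pow_four]
  refine tendsto_LSeries_complexChar_integral (by norm_num) χ₈
    (continuous_div_one_add_pow_four (by fun_prop)).continuousOn fun x _ => ?_
  have hsum : ∑ r ∈ Finset.range 8, χ₈ ((r + 1 : ℕ) : ZMod 8) * x ^ r =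
      1 - x ^ 2 - x ^ 4 + x ^ 6 := by
    norm_num [Finset.sum_range_succ, χ₈_nat_eq_if_mod_eight, sub_eq_add_neg]
  rw [hsum]
  field_simp
  ring

theorem hasDerivAt_arctan_add_arctan_div_sqrt_two (x : ℝ) :
    HasDerivAt (fun x => (Real.arctan (√2 * x + 1) + Real.arctan (√2 * x - 1)) / √2)
      ((1 + x ^ 2) / (1 + x ^ 4)) x := by
  have hpos := one_add_sqrt_two_mul_add_sq_pos x
  have hneg := one_sub_sqrt_two_mul_add_sq_pos x
  have hadd : HasDerivAt (fun x : ℝ => √2 * x + 1) √2 x := by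
    simpa using ((hasDerivAt_id x).const_mul √2).add_const 1
  have hsub : HasDerivAt (fun x : ℝ => √2 * x - 1) √2 x := by
    simpa using ((hasDerivAt_id x).const_mul √2).sub_const 1
  have haddsq : 1 + (√2 * x + 1) ^ 2 = 2 * (1 + √2 * x + x ^ 2) := by
    linear_combination x ^ 2 * Real.sq_sqrt zero_le_two
  have hsubsq : 1 + (√2 * x - 1) ^ 2 = 2 * (1 - √2 * x + x ^ 2) := by
    linear_combination x ^ 2 * Real.sq_sqrt zero_le_two
  refine ((hadd.arctan.add hsub.arctan).div_const √2).congr_deriv ?_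
  rw [one_add_pow_four_eq_mul, haddsq, hsubsq]
  field_simp
  ring

theorem integral_one_add_sq_div_one_add_pow_four :
    ∫ x in (0 : ℝ)..1, (1 + x ^ 2) / (1 + x ^ 4) = Real.pi / (2 * √2) := by
  have harctan : Real.arctan (√2 - 1) = Real.pi / 2 - Real.arctan (√2 + 1) := by
    rw [← Real.arctan_inv_of_pos (by positivity)]
    congr 1
    refine eq_inv_of_mul_eq_one_left ?_
    linear_combination Real.sq_sqrt (zero_le_two (α := ℝ))
  rw [intervalIntegral.integral_eq_sub_of_hasDerivAt
    (fun x _ => hasDerivAt_arctan_add_arctan_div_sqrt_two x)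
    ((continuous_div_one_add_pow_four (by fun_prop)).intervalIntegrable _ _)]
  simp only [mul_one, mul_zero, zero_add, zero_sub, harctan, Real.arctan_neg]
  ring

theorem tendsto_LSeries_χ₈' :
    Tendsto (LSeries (complexChar χ₈' ·)) (𝓝[{s | 1 < s.re}] 1) (𝓝 (Real.pi / (2 * √2) : ℝ)) := by
  rw [← integral_one_add_sq_div_one_add_pow_four]
  refine tendsto_LSeries_complexChar_integral (by norm_num) χ₈'
    (continuous_div_one_add_pow_four (by fun_prop)).continuousOn fun x _ => ?_
  have hsum : ∑ r ∈ Finset.range 8, χ₈' ((r + 1 : ℕ) : ZMod 8) * x ^ r =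
      1 + x ^ 2 - x ^ 4 - x ^ 6 := by
    norm_num [Finset.sum_range_succ, χ₈'_nat_eq_if_mod_eight, sub_eq_add_neg]
  rw [hsum]
  field_simp
  ring

theorem tendsto_sub_one_mul_LSeries_one (N : ℕ) [NeZero N] :
    Tendsto (fun s => (s - 1) * LSeries ((1 : DirichletCharacter ℂ N) ·) s) (𝓝[{s | 1 < s.re}] 1)
      (𝓝 (∏ p ∈ N.primeFactors, (1 - (p : ℂ)⁻¹))) := by
  have hne : {s : ℂ | 1 < s.re} ⊆ {1}ᶜ := fun s hs h => by
    simp [mem_singleton_iff.mp h] at hs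
  have hres := (DirichletCharacter.LFunctionTrivChar_residue_one (N := N)).mono_left
    (nhdsWithin_mono _ hne)
  refine hres.congr' ?_
  filter_upwards [self_mem_nhdsWithin] with s hs
  rw [DirichletCharacter.LFunctionTrivChar, DirichletCharacter.LFunction_eq_LSeries _ hs]

theorem tendsto_sub_one_mul_LSeries_one_mod_two :
    Tendsto (fun s => (s - 1) * LSeries ((1 : DirichletCharacter ℂ 2) ·) s) (𝓝[{s | 1 < s.re}] 1)
      (𝓝 (1 / 2)) := by
  convert tendsto_sub_one_mul_LSeries_one 2
  rw [Nat.prime_two.primeFactors, Finset.prod_singleton]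
  norm_num

theorem norm_inv_one_sub_sub_one_le {𝕜 : Type*} [NormedField 𝕜] {z : 𝕜} (hz : ‖z‖ ≤ 1 / 2) :
    ‖(1 - z)⁻¹ - 1‖ ≤ 2 * ‖z‖ := by
  have hlow : 1 / 2 ≤ ‖1 - z‖ := by
    have := norm_sub_norm_le 1 z
    rw [norm_one] at this
    linarith
  have hne : 1 - z ≠ 0 := norm_pos_iff.mp (one_half_pos.trans_le hlow)
  rw [show (1 - z)⁻¹ - 1 = z / (1 - z) by field_simp; ring, norm_div,
    div_le_iff₀ (norm_pos_iff.mpr hne)]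
  nlinarith [norm_nonneg z]

theorem norm_natCast_cpow_neg_lt_one {n : ℕ} (hn : 1 < n) {s : ℂ} (hs : 0 < s.re) :
    ‖(n : ℂ) ^ (-s)‖ < 1 := by
  rw [norm_natCast_cpow_of_pos (one_pos.trans hn), neg_re]
  exact Real.rpow_lt_one_of_one_lt_of_neg (by exact_mod_cast hn) (neg_lt_zero.mpr hs)

theorem norm_inv_one_sub_prime_cpow_neg_sub_one_le {p : ℕ} (hp : p.Prime) {σ : ℝ} (hσ : 1 ≤ σ)
    {s : ℂ} (hs : σ ≤ s.re) : ‖(1 - (p : ℂ) ^ (-s))⁻¹ - 1‖ ≤ 2 * (p : ℝ) ^ (-σ) := by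
  have hp1 : (1 : ℝ) ≤ p := by exact_mod_cast hp.one_le
  have hnorm : ‖(p : ℂ) ^ (-s)‖ ≤ (p : ℝ) ^ (-σ) := by
    rw [norm_natCast_cpow_of_pos hp.pos, neg_re]
    gcongr
  have hhalf : (p : ℝ) ^ (-σ) ≤ 1 / 2 := calc
    (p : ℝ) ^ (-σ) ≤ (p : ℝ) ^ (-1 : ℝ) := by gcongr
    _ = 1 / p := by rw [Real.rpow_neg_one, one_div]
    _ ≤ 1 / 2 := by gcongr; exact_mod_cast hp.two_le
  exact (norm_inv_one_sub_sub_one_le (hnorm.trans hhalf)).trans (by gcongr)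

section PrimeEulerProduct

variable (P : ℕ → Prop)

/-- The Euler product of `ζ` restricted to the primes satisfying `P`, as an unconditional product
over a subtype of `ℕ`. It need not converge, and then has a junk value, unless `1 < s.re`. -/
noncomputable def primeEulerProduct (s : ℂ) : ℂ :=
  ∏' p : {p : ℕ // p.Prime ∧ P p}, (1 - (p : ℂ) ^ (-s))⁻¹

theorem summable_two_mul_prime_rpow_neg {σ : ℝ} (hσ : 1 < σ) :
    Summable fun p : {p : ℕ // p.Prime ∧ P p} => 2 * (p : ℝ) ^ (-σ) :=
  ((Real.summable_nat_rpow.mpr (neg_lt_neg hσ)).comp_injective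
    Subtype.val_injective).mul_left 2

theorem multipliable_primeEulerProduct {s : ℂ} (hs : 1 < s.re) :
    Multipliable fun p : {p : ℕ // p.Prime ∧ P p} => (1 - (p : ℂ) ^ (-s))⁻¹ := by
  have hnorm := (summable_two_mul_prime_rpow_neg P hs).of_nonneg_of_le (fun _ => norm_nonneg _)
    fun p => norm_inv_one_sub_prime_cpow_neg_sub_one_le p.2.1 hs.le le_rfl
  simpa using multipliable_one_add_of_summable hnorm

theorem continuousAt_primeEulerProduct {s : ℂ} (hs : 1 < s.re) :
    ContinuousAt (primeEulerProduct P) s := by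
  obtain ⟨σ, hσ, hσs⟩ := exists_between hs
  have hfactor (p : {p : ℕ // p.Prime ∧ P p}) :
      ContinuousAt (fun s : ℂ => (1 - (p : ℂ) ^ (-s))⁻¹ - 1) s := by
    have hslit : (p : ℂ) ∈ slitPlane := natCast_mem_slitPlane.mpr p.2.1.ne_zero
    have hlt := norm_natCast_cpow_neg_lt_one p.2.1.one_lt (one_pos.trans hs)
    have hne : 1 - (p : ℂ) ^ (-s) ≠ 0 := sub_ne_zero.mpr fun h => by simp [← h] at hlt
    fun_prop (disch := assumption)
  have hlim := tendsto_tprod_one_add_of_dominated_convergence (𝓕 := 𝓝 s)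
    (summable_two_mul_prime_rpow_neg P hσ) (fun p => (hfactor p).tendsto) <| by
      filter_upwards [(isOpen_lt continuous_const continuous_re).mem_nhds hσs] with w hw p
      exact norm_inv_one_sub_prime_cpow_neg_sub_one_le p.2.1 hσ.le (le_of_lt hw)
  simp only [add_sub_cancel] at hlim
  exact hlim

theorem hasProd_primes_primeEulerProduct [DecidablePred P] {s : ℂ} (hs : 1 < s.re) :
    HasProd (fun p : Nat.Primes => if P p then (1 - (p : ℂ) ^ (-s))⁻¹ else 1)
      (primeEulerProduct P s) := by
  have hsub := (multipliable_primeEulerProduct P hs).hasProd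
  rw [← (Equiv.subtypeSubtypeEquivSubtypeInter Nat.Prime P).hasProd_iff] at hsub
  refine ((hasProd_subtype_iff_mulIndicator (s := {p : Nat.Primes | P p})
    (f := fun p : Nat.Primes => (1 - (p : ℂ) ^ (-s))⁻¹)).mp hsub).congr_fun fun p => ?_
  simp [mulIndicator_apply]

theorem ofReal_tprod_inv_one_sub_rpow_neg_pow {s : ℝ} (hs : 1 < s) (k : ℕ) :
    ((∏' p : {p : ℕ // p.Prime ∧ P p}, ((1 - (p : ℝ) ^ (-s))⁻¹) ^ k : ℝ) : ℂ) =
      primeEulerProduct P s ^ k := by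
  rw [primeEulerProduct, ← (multipliable_primeEulerProduct P (by simpa using hs)).tprod_pow]
  refine (Function.LeftInverse.map_tprod (g := ofRealHom) _ continuous_ofReal continuous_re
    ofReal_re).trans (tprod_congr fun p => ?_)
  simp [ofReal_cpow]

end PrimeEulerProduct

theorem dirichletCharacter_one_mod_two_natCast (n : ℕ) :
    (1 : DirichletCharacter ℂ 2) n = if n % 2 = 0 then 0 else 1 := by
  have hunit : IsUnit (n : ZMod 2) ↔ n % 2 = 1 := by
    rw [ZMod.isUnit_iff_coprime, Nat.coprime_two_right, Nat.odd_iff]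
  split_ifs with h
  · exact MulChar.map_nonunit _ (by rw [hunit]; omega)
  · exact MulChar.one_apply (hunit.mpr (by omega))

theorem eulerFactor_mod_eight_identity (p : ℕ) {x : ℂ} (hx : ‖x‖ < 1) :
    (1 - (1 : DirichletCharacter ℂ 2) p * x)⁻¹ * (1 - complexChar χ₄ p * x)⁻¹ *
      (if p % 8 = 5 then (1 - x ^ 2)⁻¹ else 1) ^ 2 =
    (1 - complexChar χ₈ p * x)⁻¹ * (1 - complexChar χ₈' p * x)⁻¹ *
      (if p % 8 = 5 then (1 - x)⁻¹ else 1) ^ 4 := by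
  have hsub : 1 - x ≠ 0 := sub_ne_zero.mpr fun h => by simp [← h] at hx
  have hadd : 1 + x ≠ 0 := fun h => by simp [eq_neg_of_add_eq_zero_right h] at hx
  have hfive : (1 - x)⁻¹ * (1 - x)⁻¹ * ((1 - x ^ 2)⁻¹) ^ 2 =
      (1 + x)⁻¹ * (1 + x)⁻¹ * ((1 - x)⁻¹) ^ 4 := by
    rw [show 1 - x ^ 2 = (1 - x) * (1 + x) by ring]
    field_simp
  simp only [dirichletCharacter_one_mod_two_natCast, MulChar.ringHomComp_apply,
    χ₄_nat_eq_if_mod_four, χ₈_nat_eq_if_mod_eight, χ₈'_nat_eq_if_mod_eight]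
  have hmod : p % 2 = 0 ∧ p % 8 ≠ 5 ∨ p % 2 = 1 ∧
      (p % 4 = 1 ∧ p % 8 = 1 ∨ p % 4 = 3 ∧ p % 8 = 3 ∨
        p % 4 = 1 ∧ p % 8 = 5 ∨ p % 4 = 3 ∧ p % 8 = 7) := by omega
  rcases hmod with ⟨h2, h8⟩ | ⟨h2, ⟨h4, h8⟩ | ⟨h4, h8⟩ | ⟨h4, h8⟩ | ⟨h4, h8⟩⟩
  · simp [h2, h8]
  · simp [h2, h4, h8]
  · simp [h2, h4, h8, mul_comm]
  · simpa [h2, h4, h8] using hfive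
  · simp [h2, h4, h8, mul_comm]

theorem LSeries_mul_primeEulerProduct {s : ℂ} (hs : 1 < s.re) :
    LSeries ((1 : DirichletCharacter ℂ 2) ·) s * LSeries (complexChar χ₄ ·) s *
      primeEulerProduct (· % 8 = 5) (2 * s) ^ 2 =
    LSeries (complexChar χ₈ ·) s * LSeries (complexChar χ₈' ·) s *
      primeEulerProduct (· % 8 = 5) s ^ 4 := by
  have hs2 : 1 < (2 * s).re := by
    rw [two_mul, add_re]
    linarith
  have hEuler {N : ℕ} (χ : DirichletCharacter ℂ N) := χ.LSeries_eulerProduct_hasProd hs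
  have hleft := ((hEuler (1 : DirichletCharacter ℂ 2)).mul (hEuler (complexChar χ₄))).mul
    ((hasProd_primes_primeEulerProduct (· % 8 = 5) hs2).pow 2)
  have hright := ((hEuler (complexChar χ₈)).mul (hEuler (complexChar χ₈'))).mul
    ((hasProd_primes_primeEulerProduct (· % 8 = 5) hs).pow 4)
  refine hleft.unique (hright.congr_fun fun p => ?_)
  have hsq : (p : ℂ) ^ (-(2 * s)) = ((p : ℂ) ^ (-s)) ^ 2 := by
    rw [← cpow_nat_mul]
    push_cast
    ring_nf
  rw [hsq]
  exact eulerFactor_mod_eight_identity p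
    (norm_natCast_cpow_neg_lt_one p.2.one_lt (one_pos.trans hs))

theorem tendsto_ofReal_nhdsGT (x : ℝ) : Tendsto ofReal (𝓝[>] x) (𝓝[{s | x < s.re}] x) :=
  continuous_ofReal.continuousWithinAt.tendsto_nhdsWithin fun _ ht => ht

theorem euler_product_residue_mod8_five_general :
    Tendsto (fun s : ℂ => (s - 1) * primeEulerProduct (· % 8 = 5) s ^ 4)
      (𝓝[{s | 1 < s.re}] 1)
      (𝓝 ((1 / (2 * Real.log (1 + √2)) : ℝ) * primeEulerProduct (· % 8 = 5) 2 ^ 2)) := by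
  have hlog : 0 < Real.log (1 + √2) := Real.log_pos (by simp)
  have hden := tendsto_LSeries_χ₈.mul tendsto_LSeries_χ₈'
  have hden0 : ((Real.log (1 + √2) / √2 : ℝ) : ℂ) * (Real.pi / (2 * √2) : ℝ) ≠ 0 := by
    norm_cast
    positivity
  have hdouble : ContinuousAt (fun s => primeEulerProduct (· % 8 = 5) (2 * s)) 1 :=
    ContinuousAt.comp (continuousAt_primeEulerProduct _ (by simp)) (by fun_prop)
  have hlim := ((tendsto_sub_one_mul_LSeries_one_mod_two.mul tendsto_LSeries_χ₄).mul
    ((hdouble.tendsto.mono_left nhdsWithin_le_nhds).pow 2)).div hden hden0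
  have hconst : (1 / 2 * (Real.pi / 4) / (Real.log (1 + √2) / √2 * (Real.pi / (2 * √2))) : ℝ) =
      1 / (2 * Real.log (1 + √2)) := by
    field_simp
    norm_num
  rw [mul_one, mul_div_right_comm] at hlim
  rw [← hconst]
  push_cast at hlim ⊢
  refine hlim.congr' ?_
  filter_upwards [self_mem_nhdsWithin, hden.eventually_ne hden0] with s hs hs0
  rw [Pi.div_apply, div_eq_iff hs0]
  linear_combination (s - 1) * LSeries_mul_primeEulerProduct hs

theorem euler_product_residue_mod8_five :
    Filter.Tendsto
      (fun s : ℝ =>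
        (s - 1) * ∏' p : {p : ℕ // p.Prime ∧ p % 8 = 5}, ((1 - (p : ℝ) ^ (-s))⁻¹) ^ 4)
      (nhdsWithin 1 (Set.Ioi 1))
      (nhds ((1 / (2 * Real.log (1 + Real.sqrt 2))) *
        ∏' p : {p : ℕ // p.Prime ∧ p % 8 = 5}, ((1 - ((p : ℝ) ^ 2)⁻¹)⁻¹) ^ 2)) := by
  have hlim := euler_product_residue_mod8_five_general.comp (tendsto_ofReal_nhdsGT 1)
  have htwo := ofReal_tprod_inv_one_sub_rpow_neg_pow (· % 8 = 5) one_lt_two 2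
  simp only [Real.rpow_neg (Nat.cast_nonneg _), Real.rpow_two] at htwo
  rw [← tendsto_ofReal_iff, ofReal_mul, htwo]
  refine hlim.congr' ?_
  filter_upwards [self_mem_nhdsWithin] with s hs
  rw [Function.comp_apply, ofReal_mul, ofReal_tprod_inv_one_sub_rpow_neg_pow _ hs]
  simp
end
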